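/- For every ν ∈ 𝓜 with ∫ log η dν > −∞, one has h_ν(f) ≤ h_ν(f,𝒫) + h_{ν,η,loc}(f), where 𝒫 is the Mańé partition associated to η (restricted to Ω). -/

import Mathlib

open MeasureTheory Filter Metric Set
open scoped ENNReal NNReal Topology

noncomputable section

variable {X : Type*} [MetricSpace X] [CompactSpace X] [MeasurableSpace X] [BorelSpace X]

/-- `Ω = X \ ⋃_{i ≥ 0} f^{-i}(I)`: the set of points whose whole forward orbit avoids `I`. -/
def dynOmega (f : X → X) (I : Set X) : Set X := {x | ∀ n : ℕ, f^[n] x ∉ I}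

/-- `μ ∈ 𝓜`: a Borel probability measure with `μ(I) = 0` which is invariant, `f_* μ = μ`. -/
def MemM (f : X → X) (I : Set X) (μ : Measure X) : Prop :=
  IsProbabilityMeasure μ ∧ μ I = 0 ∧ Measure.map f μ = μ

/-- A countable Borel partition of a set `S`, indexed by `ℕ` (empty atoms are allowed). -/
def IsCountablePartition (S : Set X) (P : ℕ → Set X) : Prop :=
  (∀ i, MeasurableSet (P i)) ∧ (Pairwise fun i j => Disjoint (P i) (P j)) ∧ (⋃ i, P i) = S

/-- The entropy `H_ν(P) = ∑_{P ∈ 𝒫} - ν(P) log ν(P)` of a countable partition,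
with values in `ℝ≥0∞`. -/
def partEntropy {ι : Type*} (ν : Measure X) (P : ι → Set X) : ℝ≥0∞ :=
  ∑' i, ENNReal.ofReal (Real.negMulLog (ν (P i)).toReal)

/-- The atoms of the refined partition `⋁_{i=0}^{q-1} f^{-i} 𝒫`. -/
def refinedAtoms (f : X → X) (P : ℕ → Set X) (q : ℕ) : (Fin q → ℕ) → Set X :=
  fun s => ⋂ i : Fin q, f^[(i : ℕ)] ⁻¹' P (s i)

/-- `V_n = {x : e^{-(n+1)} < η x ≤ e^{-n}}`. -/
def Vset (η : X → ℝ) (n : ℕ) : Set X :=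
  {x | Real.exp (-(n + 1 : ℝ)) < η x ∧ η x ≤ Real.exp (-(n : ℝ))}

/-- The Mané partition `𝒫` associated to `η` on a manifold of complex dimension `k`:
a countable Borel partition of `{η ≠ 0}` such that every nonempty atom is contained in
some `V_n` and has diameter `< r_n = e^{-(n+1)}`, and such that the number of atoms
contained in `V_n` is at most `C (1/r_n)^{2k} = C e^{2k(n+1)}` for a constant `C > 0`. -/
def IsManePartition (k : ℕ) (η : X → ℝ) (P : ℕ → Set X) : Prop :=
  IsCountablePartition {x | η x ≠ 0} P ∧
  (∀ i, (P i).Nonempty → ∃ n : ℕ, P i ⊆ Vset η n ∧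
      Metric.diam (P i) < Real.exp (-(n + 1 : ℝ))) ∧
  (∃ C > (0 : ℝ), ∀ n : ℕ,
      {i | (P i).Nonempty ∧ P i ⊆ Vset η n}.Finite ∧
      (({i | (P i).Nonempty ∧ P i ⊆ Vset η n}.ncard : ℝ)
        ≤ C * Real.exp (2 * k * (n + 1 : ℝ))))

/-- The dynamical ball
`B(x, η, n, f) = {y ∈ Ω : dist(f^i x, f^i y) ≤ η(f^i x) for i = 0, …, n-1}`. -/
def dynBall (f : X → X) (Ω : Set X) (η : X → ℝ) (x : X) (n : ℕ) : Set X :=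
  {y ∈ Ω | ∀ i < n, dist (f^[i] x) (f^[i] y) ≤ η (f^[i] x)}

/-- A set is `(n,γ)`-separated if any two distinct points are `γ`-apart at some time `< n`. -/
def IsDynSep (f : X → X) (n : ℕ) (γ : ℝ) (S : Set X) : Prop :=
  S.Pairwise fun y z => ∃ i < n, γ < dist (f^[i] y) (f^[i] z)

/-- `r(n, γ, η, Λ, x)`: the maximal cardinality of an `(n,γ)`-separated subset of
`B(x, η, n, f) ∩ Λ`. -/
def sepCount (f : X → X) (Ω : Set X) (η : X → ℝ) (n : ℕ) (γ : ℝ) (Λ : Set X) (x : X) : ℕ :=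
  sSup {m : ℕ | ∃ S : Finset X,
    ↑S ⊆ dynBall f Ω η x n ∩ Λ ∧ IsDynSep f n γ ↑S ∧ S.card = m}

/-- The local entropy
`h_{ν,η,loc}(f) = lim_{σ→1⁻} inf_{Λ : ν(Λ) ≥ σ} lim_{γ→0} limsup_n (1/n) ∫_Λ log r(n,γ,η,Λ,x) dν(x)`.
Since `r` is nonincreasing in `γ` and the infimum over `Λ` is nondecreasing in `σ`, the two
outer limits are the suprema over `γ > 0` and over `σ < 1` respectively; the value is taken
in `ℝ≥0∞`. -/
def locEntropy (f : X → X) (Ω : Set X) (η : X → ℝ) (ν : Measure X) : ℝ≥0∞ :=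
  ⨆ σ : Ioo (0 : ℝ) 1, ⨅ Λ : {Λ : Set X // ENNReal.ofReal σ.1 ≤ ν Λ},
    ⨆ γ : Ioi (0 : ℝ),
      Filter.limsup
        (fun n : ℕ =>
          (∫⁻ x in (Λ : Set X),
            ENNReal.ofReal (Real.log (sepCount f Ω η n γ.1 Λ x)) ∂ν) / n)
        atTop

/-- `h_ν(f, 𝒫) = inf_{q ≥ 1} (1/q) H_ν(⋁_{i=0}^{q-1} f^{-i} 𝒫)`. -/
def dynEntropy (f : X → X) (ν : Measure X) (P : ℕ → Set X) : ℝ≥0∞ :=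
  ⨅ q : ℕ, partEntropy ν (refinedAtoms f P (q + 1)) / (q + 1)

/-- The metric entropy `h_ν(f)`: the supremum of `h_ν(f, 𝒬)` over all countable Borel
partitions `𝒬` of `Ω` with `H_ν(𝒬) < ∞`. -/
def metricEntropy (f : X → X) (Ω : Set X) (ν : Measure X) : ℝ≥0∞ :=
  ⨆ Q : {Q : ℕ → Set X // IsCountablePartition Ω Q ∧ partEntropy ν Q < ⊤},
    dynEntropy f ν Q.1

/-!
Let `a` label a partition of finite entropy and `b` the Mañé partition. As in Lusin's theorem, `a`
is continuous on a compact set `K` outside of which it carries little entropy, so recording `a`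
outside `K` only costs little entropy per unit of time. Points with the same `b`-itinerary and the
same record as `x` stay in the dynamical ball of `x`, and if their `a`-itineraries differ at some
time then both are in `K` at that time, with different labels, hence a fixed distance `γ` apart. So
the itineraries of `a` that are compatible with the code of `x` are at most `r(n, γ, η, Λ, x)` in
number if `x` is in `Λ`, and at most exponentially many, at a rate depending only on `K`, otherwise.
The entropy of the `a`-itinerary is at most that of the code plus the integral of the logarithm of
this number.
-/

/-- The information content `-log p` of an event of probability `p`. It is `⊤` at `p = 0`, unlike
`Real.log`, and hence antitone. -/
def information (p : ℝ≥0∞) : ℝ≥0∞ := (-ENNReal.log p).toENNReal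

lemma information_antitone : Antitone information := fun _ _ hpq =>
  EReal.toENNReal_le_toENNReal (EReal.neg_le_neg_iff.2 (ENNReal.log_monotone hpq))

lemma information_zero : information 0 = ⊤ := by
  simp [information]

lemma information_one : information 1 = 0 := by
  simp [information]

lemma information_of_ne_zero {p : ℝ≥0∞} (hp : p ≠ 0) :
    information p = ENNReal.ofReal (-Real.log p.toReal) := by
  rw [information, EReal.toENNReal_of_ne_top (by simpa using hp), EReal.toReal_neg_eq]
  by_cases hp_top : p = ⊤
  · simp [hp_top]
  · rw [ENNReal.log_pos_real hp hp_top, EReal.toReal_coe]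

lemma information_inv_natCast (n : ℕ) :
    information (n : ℝ≥0∞)⁻¹ = ENNReal.ofReal (Real.log n) := by
  rw [information_of_ne_zero (by simp), ENNReal.toReal_inv, Real.log_inv, neg_neg,
    ENNReal.toReal_natCast]

lemma ofReal_log_natCast_mono {m n : ℕ} (h : m ≤ n) :
    ENNReal.ofReal (Real.log m) ≤ ENNReal.ofReal (Real.log n) := by
  rw [← information_inv_natCast, ← information_inv_natCast]
  exact information_antitone (by gcongr)

lemma information_mul_le (p q : ℝ≥0∞) : information (p * q) ≤ information p + information q := by
  rcases eq_or_ne p 0 with rfl | hp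
  · simp [information_zero]
  rcases eq_or_ne q 0 with rfl | hq
  · simp [information_zero]
  calc information (p * q)
    _ = (-ENNReal.log p + -ENNReal.log q).toENNReal := by
      rw [information, ENNReal.log_mul_add,
        EReal.neg_add (.inl (by simpa using hp)) (.inr (by simpa using hq)), sub_eq_add_neg]
    _ ≤ information p + information q := EReal.toENNReal_add_le

lemma ofReal_negMulLog_toReal (p : ℝ≥0∞) :
    ENNReal.ofReal (Real.negMulLog p.toReal) = p * information p := by
  rcases eq_or_ne p 0 with rfl | hp₀
  · simp
  rcases eq_or_ne p ⊤ with rfl | hp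
  · simp [information]
  · rw [information_of_ne_zero hp₀, Real.negMulLog, neg_mul_comm,
      ENNReal.ofReal_mul ENNReal.toReal_nonneg, ENNReal.ofReal_toReal hp]

lemma mul_information_add_self_le {p : ℝ≥0∞} (hp : p ≤ 1) (q : ℝ≥0∞) :
    p * information p + p ≤ p * information q + q := by
  rcases eq_or_ne p 0 with rfl | hp₀
  · simp
  rcases eq_or_ne q 0 with rfl | hq₀
  · simp [information_zero, hp₀]
  rcases eq_or_ne q ⊤ with rfl | hq
  · simp
  have hp_top : p ≠ ⊤ := (hp.trans_lt ENNReal.one_lt_top).ne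
  have hP : 0 < p.toReal := ENNReal.toReal_pos hp₀ hp_top
  have hQ : 0 < q.toReal := ENNReal.toReal_pos hq₀ hq
  have tangent : Real.negMulLog p.toReal + p.toReal
      ≤ p.toReal * -Real.log q.toReal + q.toReal := by
    have h := Real.log_le_sub_one_of_pos (div_pos hQ hP)
    rw [Real.log_div hQ.ne' hP.ne', sub_le_iff_le_add, div_sub_one hP.ne', div_add' _ _ _ hP.ne',
      le_div_iff₀ hP] at h
    rw [Real.negMulLog]
    linarith
  calc p * information p + p
    _ = ENNReal.ofReal (Real.negMulLog p.toReal + p.toReal) := by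
      rw [ENNReal.ofReal_add (Real.negMulLog_nonneg hP.le (ENNReal.toReal_le_of_le_ofReal
        zero_le_one (by simpa using hp))) hP.le, ofReal_negMulLog_toReal,
        ENNReal.ofReal_toReal hp_top]
    _ ≤ ENNReal.ofReal (p.toReal * -Real.log q.toReal + q.toReal) :=
      ENNReal.ofReal_le_ofReal tangent
    _ ≤ ENNReal.ofReal (p.toReal * -Real.log q.toReal) + ENNReal.ofReal q.toReal :=
      ENNReal.ofReal_add_le
    _ = p * information q + q := by
      rw [ENNReal.ofReal_mul hP.le, ← information_of_ne_zero hq₀, ENNReal.ofReal_toReal hp_top,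
        ENNReal.ofReal_toReal hq]

/-- The Shannon entropy of the partition of `α` into the fibers of a labelling `Y`. -/
def shannonEntropy {α ι : Type*} [MeasurableSpace α] (μ : Measure α) (Y : α → ι) : ℝ≥0∞ :=
  partEntropy μ fun i => Y ⁻¹' {i}

/-- The labels that `Y` takes with positive probability on the fiber `{Z = i}`. -/
def condSupport {α ι κ : Type*} [MeasurableSpace α] (μ : Measure α) (Z : α → ι) (Y : α → κ)
    (i : ι) : Set κ :=
  {j | μ (Z ⁻¹' {i} ∩ Y ⁻¹' {j}) ≠ 0}

section ShannonEntropy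

variable {α ι κ : Type*} [MeasurableSpace α] {μ : Measure α} {Z : α → ι} {Y : α → κ}

lemma shannonEntropy_eq_tsum (μ : Measure α) (Y : α → κ) :
    shannonEntropy μ Y = ∑' j, μ (Y ⁻¹' {j}) * information (μ (Y ⁻¹' {j})) :=
  tsum_congr fun _ => ofReal_negMulLog_toReal _

lemma ae_mem_condSupport [Countable ι] [Countable κ] :
    ∀ᵐ x ∂μ, Y x ∈ condSupport μ Z Y (Z x) := by
  have fiber_ne_zero : ∀ᵐ x ∂μ, ∀ p : ι × κ,
      x ∈ Z ⁻¹' {p.1} ∩ Y ⁻¹' {p.2} → μ (Z ⁻¹' {p.1} ∩ Y ⁻¹' {p.2}) ≠ 0 := by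
    refine ae_all_iff.2 fun p => ?_
    by_cases hp : μ (Z ⁻¹' {p.1} ∩ Y ⁻¹' {p.2}) = 0
    · filter_upwards [measure_eq_zero_iff_ae_notMem.1 hp] with x hx hx' using absurd hx' hx
    · exact .of_forall fun _ _ => hp
  filter_upwards [fiber_ne_zero] with x hx using hx (Z x, Y x) ⟨rfl, rfl⟩

lemma shannonEntropy_comp_measurePreserving [MeasurableSpace κ] [MeasurableSingletonClass κ]
    {β : Type*} [MeasurableSpace β] {ν : Measure β} {g : β → α} (hg : MeasurePreserving g ν μ)
    (hY : Measurable Y) : shannonEntropy ν (Y ∘ g) = shannonEntropy μ Y := by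
  simp only [shannonEntropy_eq_tsum, preimage_comp,
    hg.measure_preimage (hY (measurableSet_singleton _)).nullMeasurableSet]

variable [MeasurableSpace ι] [MeasurableSingletonClass ι] [Countable ι]
  [MeasurableSpace κ] [MeasurableSingletonClass κ] [Countable κ]

lemma lintegral_comp_eq_tsum (hY : Measurable Y) (g : κ → ℝ≥0∞) :
    ∫⁻ x, g (Y x) ∂μ = ∑' j, μ (Y ⁻¹' {j}) * g j := by
  rw [← lintegral_map (measurable_of_countable g) hY, lintegral_countable']
  refine tsum_congr fun j => ?_
  rw [Measure.map_apply hY (measurableSet_singleton j), mul_comm]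

lemma shannonEntropy_eq_lintegral (hY : Measurable Y) :
    shannonEntropy μ Y = ∫⁻ x, information (μ (Y ⁻¹' {Y x})) ∂μ := by
  rw [shannonEntropy_eq_tsum, lintegral_comp_eq_tsum hY fun j => information (μ (Y ⁻¹' {j}))]

lemma shannonEntropy_comp_le (hY : Measurable Y) (g : κ → ι) :
    shannonEntropy μ (g ∘ Y) ≤ shannonEntropy μ Y := by
  rw [shannonEntropy_eq_lintegral hY,
    shannonEntropy_eq_lintegral ((measurable_of_countable g).comp hY)]
  refine lintegral_mono fun x => information_antitone (measure_mono fun y hy => ?_)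
  exact congrArg g hy

lemma tsum_measure_fiber [IsProbabilityMeasure μ] (hY : Measurable Y) :
    ∑' j, μ (Y ⁻¹' {j}) = 1 := by
  simpa using (lintegral_comp_eq_tsum (μ := μ) hY 1).symm

lemma shannonEntropy_le_lintegral_information [IsProbabilityMeasure μ] (hY : Measurable Y)
    {q : κ → ℝ≥0∞} (hq : ∑' j, q j ≤ 1) :
    shannonEntropy μ Y ≤ ∫⁻ x, information (q (Y x)) ∂μ := by
  have gibbs : shannonEntropy μ Y + 1 ≤ ∫⁻ x, information (q (Y x)) ∂μ + 1 := calc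
    shannonEntropy μ Y + 1
      = ∑' j, (μ (Y ⁻¹' {j}) * information (μ (Y ⁻¹' {j})) + μ (Y ⁻¹' {j})) := by
        rw [ENNReal.tsum_add, ← shannonEntropy_eq_tsum, tsum_measure_fiber hY]
    _ ≤ ∑' j, (μ (Y ⁻¹' {j}) * information (q j) + q j) :=
        ENNReal.tsum_le_tsum fun j => mul_information_add_self_le prob_le_one (q j)
    _ ≤ ∫⁻ x, information (q (Y x)) ∂μ + 1 := by
        rw [ENNReal.tsum_add, ← lintegral_comp_eq_tsum hY fun j => information (q j)]
        gcongr
  exact (ENNReal.add_le_add_iff_right ENNReal.one_ne_top).1 gibbs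

lemma shannonEntropy_le_log_card [IsProbabilityMeasure μ] [Finite κ] (hY : Measurable Y) :
    shannonEntropy μ Y ≤ ENNReal.ofReal (Real.log (Nat.card κ)) := by
  have uniform : ∑' _ : κ, (Nat.card κ : ℝ≥0∞)⁻¹ ≤ 1 := by
    rw [ENNReal.tsum_const, ENat.card_eq_coe_natCard]
    exact ENNReal.mul_inv_le_one _
  refine (shannonEntropy_le_lintegral_information hY uniform).trans_eq ?_
  rw [lintegral_const, measure_univ, mul_one, information_inv_natCast]

lemma shannonEntropy_prodMk_le_of_tsum_le [IsProbabilityMeasure μ] (hZ : Measurable Z)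
    (hY : Measurable Y) {q : ι → κ → ℝ≥0∞} (hq : ∀ i, ∑' j, q i j ≤ 1) :
    shannonEntropy μ (fun x => (Z x, Y x))
      ≤ shannonEntropy μ Z + ∫⁻ x, information (q (Z x) (Y x)) ∂μ := by
  have total : ∑' p : ι × κ, μ (Z ⁻¹' {p.1}) * q p.1 p.2 ≤ 1 := calc
    ∑' p : ι × κ, μ (Z ⁻¹' {p.1}) * q p.1 p.2
      = ∑' i, μ (Z ⁻¹' {i}) * ∑' j, q i j := by
        simp_rw [ENNReal.tsum_prod', ENNReal.tsum_mul_left]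
    _ ≤ ∑' i, μ (Z ⁻¹' {i}) * 1 := by gcongr; exact hq _
    _ = 1 := by simp_rw [mul_one, tsum_measure_fiber hZ]
  calc shannonEntropy μ (fun x => (Z x, Y x))
    _ ≤ ∫⁻ x, information (μ (Z ⁻¹' {Z x}) * q (Z x) (Y x)) ∂μ :=
      shannonEntropy_le_lintegral_information (hZ.prodMk hY) total
    _ ≤ ∫⁻ x, information (μ (Z ⁻¹' {Z x})) + information (q (Z x) (Y x)) ∂μ :=
      lintegral_mono fun x => information_mul_le _ _
    _ = shannonEntropy μ Z + ∫⁻ x, information (q (Z x) (Y x)) ∂μ := by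
      rw [shannonEntropy_eq_lintegral hZ]
      exact lintegral_add_left
        ((measurable_of_countable fun i => information (μ (Z ⁻¹' {i}))).comp hZ) _

lemma shannonEntropy_prodMk_le [IsProbabilityMeasure μ] (hZ : Measurable Z) (hY : Measurable Y) :
    shannonEntropy μ (fun x => (Z x, Y x)) ≤ shannonEntropy μ Z + shannonEntropy μ Y := by
  rw [shannonEntropy_eq_lintegral hY]
  exact shannonEntropy_prodMk_le_of_tsum_le hZ hY (q := fun _ j => μ (Y ⁻¹' {j}))
    fun _ => (tsum_measure_fiber hY).le

lemma shannonEntropy_prodMk_le_add_lintegral_log_ncard [IsProbabilityMeasure μ]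
    (hZ : Measurable Z) (hY : Measurable Y) (hfin : ∀ i, (condSupport μ Z Y i).Finite) :
    shannonEntropy μ (fun x => (Z x, Y x)) ≤ shannonEntropy μ Z
      + ∫⁻ x, ENNReal.ofReal (Real.log (condSupport μ Z Y (Z x)).ncard) ∂μ := by
  set S := condSupport μ Z Y
  -- Gibbs' inequality is applied with the uniform law on `S i` in place of that of `Y` on `Z = i`.
  have uniform (i : ι) :
      ∑' j, (S i).indicator (fun _ => ((S i).ncard : ℝ≥0∞)⁻¹) j ≤ 1 := by
    rw [← tsum_subtype, ENNReal.tsum_set_const, ← (hfin i).cast_ncard_eq]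
    exact ENNReal.mul_inv_le_one _
  refine (shannonEntropy_prodMk_le_of_tsum_le hZ hY uniform).trans_eq ?_
  congr 1
  refine lintegral_congr_ae ?_
  filter_upwards [ae_mem_condSupport (μ := μ) (Z := Z) (Y := Y)] with x hx
  rw [indicator_of_mem hx, information_inv_natCast]

end ShannonEntropy

/-- The itinerary of `x` up to time `n`: the labels of the first `n` points of its `f`-orbit. -/
def itinerary {α ι : Type*} (f : α → α) (a : α → ι) (n : ℕ) (x : α) : Fin n → ι :=
  fun i => a (f^[i] x)

section Itinerary

variable {α ι : Type*} {f : α → α} {a : α → ι}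

lemma itinerary_add (f : α → α) (a : α → ι) (m n : ℕ) (x : α) :
    itinerary f a (m + n) x = Fin.append (itinerary f a m x) (itinerary f a n (f^[m] x)) := by
  ext i
  refine Fin.addCases (fun i => ?_) (fun i => ?_) i
  · simp [itinerary]
  · simp [itinerary, ← Function.iterate_add_apply, add_comm]

lemma itinerary_eq_iff {n : ℕ} {x y : α} :
    itinerary f a n x = itinerary f a n y ↔ ∀ i < n, a (f^[i] x) = a (f^[i] y) :=
  funext_iff.trans Fin.forall_iff

lemma itinerary_preimage_singleton (f : α → α) (a : α → ι) {n : ℕ} (s : Fin n → ι) :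
    itinerary f a n ⁻¹' {s} = ⋂ i : Fin n, f^[i] ⁻¹' (a ⁻¹' {s i}) := by
  ext x
  simp [itinerary, funext_iff]

variable [MeasurableSpace α] [MeasurableSpace ι] {μ : Measure α}

lemma measurable_itinerary (hf : Measurable f) (ha : Measurable a) (n : ℕ) :
    Measurable (itinerary f a n) :=
  measurable_pi_lambda _ fun i => ha.comp (hf.iterate i)

variable [MeasurableSingletonClass ι] [Countable ι] [IsProbabilityMeasure μ]

lemma shannonEntropy_itinerary_add_le (hf : MeasurePreserving f μ μ) (ha : Measurable a)
    (m n : ℕ) :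
    shannonEntropy μ (itinerary f a (m + n))
      ≤ shannonEntropy μ (itinerary f a m) + shannonEntropy μ (itinerary f a n) := by
  have hm := measurable_itinerary hf.measurable ha m
  have hn := measurable_itinerary hf.measurable ha n
  have hn' : Measurable (itinerary f a n ∘ f^[m]) := hn.comp (hf.measurable.iterate m)
  calc shannonEntropy μ (itinerary f a (m + n))
    _ = shannonEntropy μ ((fun p : (Fin m → ι) × (Fin n → ι) => Fin.append p.1 p.2) ∘
          fun x => (itinerary f a m x, (itinerary f a n ∘ f^[m]) x)) :=
      congrArg _ (funext (itinerary_add f a m n))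
    _ ≤ shannonEntropy μ (fun x => (itinerary f a m x, (itinerary f a n ∘ f^[m]) x)) :=
      shannonEntropy_comp_le (hm.prodMk hn') _
    _ ≤ shannonEntropy μ (itinerary f a m) + shannonEntropy μ (itinerary f a n ∘ f^[m]) :=
      shannonEntropy_prodMk_le hm hn'
    _ = shannonEntropy μ (itinerary f a m) + shannonEntropy μ (itinerary f a n) := by
      rw [shannonEntropy_comp_measurePreserving (hf.iterate m) hn]

lemma shannonEntropy_itinerary_mul_le (hf : MeasurePreserving f μ μ) (ha : Measurable a)
    (m q : ℕ) :
    shannonEntropy μ (itinerary f a (m * q)) ≤ m * shannonEntropy μ (itinerary f a q) := by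
  induction m with
  | zero =>
    rw [Nat.zero_mul, Nat.cast_zero, zero_mul]
    refine (shannonEntropy_le_log_card (measurable_itinerary hf.measurable ha 0)).trans ?_
    simp
  | succ m ih =>
    calc shannonEntropy μ (itinerary f a ((m + 1) * q))
      _ ≤ shannonEntropy μ (itinerary f a (m * q)) + shannonEntropy μ (itinerary f a q) := by
        rw [Nat.succ_mul]
        exact shannonEntropy_itinerary_add_le hf ha _ _
      _ ≤ m * shannonEntropy μ (itinerary f a q) + shannonEntropy μ (itinerary f a q) := by
        gcongr
      _ = (m + 1 : ℕ) * shannonEntropy μ (itinerary f a q) := by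
        push_cast
        ring

lemma shannonEntropy_itinerary_le (hf : MeasurePreserving f μ μ) (ha : Measurable a) (n : ℕ) :
    shannonEntropy μ (itinerary f a n) ≤ n * shannonEntropy μ a := calc
  shannonEntropy μ (itinerary f a n)
    ≤ n * shannonEntropy μ (itinerary f a 1) := by
      have h := shannonEntropy_itinerary_mul_le hf ha n 1
      rwa [mul_one] at h
  _ = n * shannonEntropy μ ((fun i (_ : Fin 1) => i) ∘ a) := by
      congr 2
      ext x i
      simp [itinerary]
  _ ≤ n * shannonEntropy μ a := by
      gcongr
      exact shannonEntropy_comp_le ha _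

end Itinerary

section Label

variable {α : Type*} [MeasurableSpace α] {ν : Measure α} {f : α → α} {S : Set α} {Q : ℕ → Set α}
  {a : α → ℕ}

lemma exists_measurable_label (hQ : IsCountablePartition S Q) (hS : ∀ᵐ x ∂ν, x ∈ S) :
    ∃ a : α → ℕ, Measurable a ∧ ∀ i, Q i =ᵐ[ν] a ⁻¹' {i} := by
  obtain ⟨hQ_meas, hQ_disj, hQ_union⟩ := hQ
  obtain ⟨a, ha, haQ⟩ := exists_measurable_piecewise Q hQ_meas (fun i _ => i)
    (fun _ => measurable_const) fun i j hij x hx =>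
      ((hQ_disj hij).le_bot hx).elim
  refine ⟨a, ha, fun i => eventuallyEq_set.2 ?_⟩
  filter_upwards [hS] with x hx
  obtain ⟨j, hj⟩ := mem_iUnion.1 (hQ_union ▸ hx)
  have haj : a x = j := haQ j hj
  refine ⟨fun hi => haQ i hi, fun hi => ?_⟩
  obtain rfl : j = i := haj.symm.trans hi
  exact hj

lemma partEntropy_eq_shannonEntropy {ι : Type*} {R : ι → Set α} {c : α → ι}
    (hcR : ∀ i, R i =ᵐ[ν] c ⁻¹' {i}) : partEntropy ν R = shannonEntropy ν c :=
  tsum_congr fun i => by rw [measure_congr (hcR i)]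

lemma partEntropy_refinedAtoms (hf : MeasurePreserving f ν ν)
    (haQ : ∀ i, Q i =ᵐ[ν] a ⁻¹' {i}) (n : ℕ) :
    partEntropy ν (refinedAtoms f Q n) = shannonEntropy ν (itinerary f a n) := by
  refine partEntropy_eq_shannonEntropy fun s => ?_
  rw [itinerary_preimage_singleton]
  exact Filter.EventuallyEq.countable_iInter fun i =>
    (hf.iterate i).quasiMeasurePreserving.preimage_ae_eq (haQ (s i))

lemma dynEntropy_eq_iInf_itinerary (hf : MeasurePreserving f ν ν)
    (haQ : ∀ i, Q i =ᵐ[ν] a ⁻¹' {i}) :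
    dynEntropy f ν Q = ⨅ q : ℕ, shannonEntropy ν (itinerary f a (q + 1)) / (q + 1) := by
  simp only [dynEntropy, partEntropy_refinedAtoms hf haQ]

lemma dynEntropy_le_itinerary_div (hf : MeasurePreserving f ν ν)
    (haQ : ∀ i, Q i =ᵐ[ν] a ⁻¹' {i}) {n : ℕ} (hn : n ≠ 0) :
    dynEntropy f ν Q ≤ shannonEntropy ν (itinerary f a n) / n := by
  obtain ⟨q, rfl⟩ := Nat.exists_eq_succ_of_ne_zero hn
  rw [dynEntropy_eq_iInf_itinerary hf haQ]
  exact_mod_cast iInf_le (fun q : ℕ => shannonEntropy ν (itinerary f a (q + 1)) / (q + 1)) q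

lemma frequently_itinerary_div_lt [IsProbabilityMeasure ν] (hf : MeasurePreserving f ν ν)
    (ha : Measurable a) (haQ : ∀ i, Q i =ᵐ[ν] a ⁻¹' {i}) {c : ℝ≥0∞} (hc : dynEntropy f ν Q < c) :
    ∃ᶠ n in atTop, shannonEntropy ν (itinerary f a n) / n < c := by
  rw [dynEntropy_eq_iInf_itinerary hf haQ, iInf_lt_iff] at hc
  obtain ⟨q, hq⟩ := hc
  refine frequently_atTop.2 fun N => ⟨(N + 1) * (q + 1), by nlinarith, ?_⟩
  calc shannonEntropy ν (itinerary f a ((N + 1) * (q + 1))) / ((N + 1) * (q + 1) : ℕ)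
    _ ≤ (N + 1 : ℕ) * shannonEntropy ν (itinerary f a (q + 1)) / ((N + 1) * (q + 1) : ℕ) := by
      gcongr
      exact shannonEntropy_itinerary_mul_le hf ha _ _
    _ = shannonEntropy ν (itinerary f a (q + 1)) / (q + 1) := by
      push_cast
      exact ENNReal.mul_div_mul_left _ _ (by simp) (by finiteness)
    _ < c := hq

end Label

section SeparatedSets

lemma packingNumber_ne_top {E : Type*} [PseudoEMetricSpace E] {A : Set E}
    (hA : TotallyBounded A) {ε : ℝ≥0} (hε : ε ≠ 0) : packingNumber ε A ≠ ⊤ := by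
  obtain ⟨N, -, hN, hcover⟩ :=
    exists_finite_isCover_of_totallyBounded (div_ne_zero hε two_ne_zero) hA
  refine ne_top_of_le_ne_top (encard_ne_top_iff.2 hN) ?_
  calc packingNumber ε A
    _ = packingNumber (2 * (ε / 2)) A := by rw [mul_div_cancel₀ _ two_ne_zero]
    _ ≤ externalCoveringNumber (ε / 2) A := packingNumber_two_mul_le_externalCoveringNumber _ _
    _ ≤ N.encard := hcover.externalCoveringNumber_le_encard

variable {E : Type*} [MetricSpace E] {f : E → E} {n : ℕ} {γ : ℝ}

lemma IsDynSep.injOn_itinerary {S : Set E} (hS : IsDynSep f n γ S) (hγ : 0 ≤ γ) :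
    InjOn (itinerary f id n) S := by
  intro y hy z hz hyz
  by_contra hne
  obtain ⟨i, hi, hd⟩ := hS hy hz hne
  have heq : f^[i] y = f^[i] z := itinerary_eq_iff.1 hyz i hi
  exact (hd.trans_le (dist_le_zero.2 heq)).not_ge hγ

/-- Dynamical separation is separation of the orbit segments for the sup metric. -/
lemma IsDynSep.isSeparated_image_itinerary {S : Set E} (hS : IsDynSep f n γ S) (hγ : 0 ≤ γ) :
    IsSeparated (ENNReal.ofReal γ) (itinerary f id n '' S) := by
  rintro _ ⟨y, hy, rfl⟩ _ ⟨z, hz, rfl⟩ hyz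
  obtain ⟨i, hi, hd⟩ := hS hy hz (fun h => hyz (congrArg _ h))
  calc ENNReal.ofReal γ
    _ < edist (f^[i] y) (f^[i] z) := by
      rwa [edist_dist, ENNReal.ofReal_lt_ofReal_iff (hγ.trans_lt hd)]
    _ ≤ edist (itinerary f id n y) (itinerary f id n z) :=
      edist_le_pi_edist (itinerary f id n y) (itinerary f id n z) ⟨i, hi⟩

lemma bddAbove_card_isDynSep [CompactSpace E] (f : E → E) (n : ℕ) (hγ : 0 < γ) (D : Set E) :
    BddAbove {m : ℕ | ∃ S : Finset E, ↑S ⊆ D ∧ IsDynSep f n γ ↑S ∧ S.card = m} := by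
  have hfin : packingNumber γ.toNNReal (univ : Set (Fin n → E)) ≠ ⊤ :=
    packingNumber_ne_top isCompact_univ.totallyBounded (by simpa using hγ)
  refine ⟨(packingNumber γ.toNNReal (univ : Set (Fin n → E))).toNat, ?_⟩
  rintro _ ⟨S, -, hS, rfl⟩
  rw [← Nat.cast_le (α := ℕ∞), ENat.natCast_toNat hfin, ← encard_coe_eq_coe_finsetCard,
    ← (hS.injOn_itinerary hγ.le).encard_image]
  exact (hS.isSeparated_image_itinerary hγ.le).encard_le_packingNumber (subset_univ _)

lemma ncard_le_sepCount [CompactSpace E] {ι : Type*} {Ω Λ : Set E} {η : E → ℝ} {x : E}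
    {J : Set ι} (hJ : J.Finite) (hγ : 0 < γ) {Y : ι → E}
    (hY : ∀ j ∈ J, Y j ∈ dynBall f Ω η x n ∩ Λ)
    (hsep : J.Pairwise fun j l => ∃ i < n, γ < dist (f^[i] (Y j)) (f^[i] (Y l))) :
    J.ncard ≤ sepCount f Ω η n γ Λ x := by
  classical
  have hY_inj : InjOn Y J := by
    intro j hj l hl hjl
    by_contra hne
    obtain ⟨i, -, hd⟩ := hsep hj hl hne
    rw [hjl, dist_self] at hd
    exact hd.not_gt hγ
  lift J to Finset ι using hJ
  rw [ncard_coe_finset]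
  refine le_csSup (bddAbove_card_isDynSep f n hγ _)
    ⟨J.image Y, ?_, ?_, Finset.card_image_of_injOn hY_inj⟩
  · rw [Finset.coe_image]
    exact image_subset_iff.2 hY
  · rw [Finset.coe_image]
    rintro _ ⟨j, hj, rfl⟩ _ ⟨l, hl, rfl⟩ hjl
    exact hsep hj hl fun h => hjl (congrArg Y h)

end SeparatedSets

section CompactApproximation

variable {α : Type*} {a : α → ℕ} {K : Set α}

/-- The labelling `a` shifted by one outside `K` and forgotten inside `K`: it takes the value `0`
exactly on `K`. -/
def tailLabel (K : Set α) (a : α → ℕ) : α → ℕ := Kᶜ.indicator fun x => a x + 1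

lemma tailLabel_preimage_zero : tailLabel K a ⁻¹' {0} = K := by
  ext x
  by_cases hx : x ∈ K <;> simp [tailLabel, hx]

lemma tailLabel_preimage_succ (i : ℕ) : tailLabel K a ⁻¹' {i + 1} = a ⁻¹' {i} \ K := by
  ext x
  by_cases hx : x ∈ K <;> simp [tailLabel, hx]

lemma mem_of_tailLabel_eq {x y : α} (h : tailLabel K a x = tailLabel K a y) (hne : a x ≠ a y) :
    x ∈ K ∧ y ∈ K := by
  by_cases hx : x ∈ K <;> by_cases hy : y ∈ K <;> simp_all [tailLabel]

lemma tailLabel_of_notMem {x : α} (hx : x ∉ K) : tailLabel K a x = a x + 1 := by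
  simp [tailLabel, hx]

lemma exists_pos_forall_lt_dist {E : Type*} [PseudoMetricSpace E] {K : Set E} {a : E → ℕ}
    (hK : IsCompact K) (ha : ContinuousOn a K) :
    ∃ γ > 0, ∀ x ∈ K, ∀ y ∈ K, a x ≠ a y → γ < dist x y := by
  obtain ⟨δ, hδ, h⟩ := Metric.uniformContinuousOn_iff.1
    (hK.uniformContinuousOn_of_continuous ha) 1 one_pos
  refine ⟨δ / 2, half_pos hδ, fun x hx y hy hne => ?_⟩
  by_contra! hxy
  exact (h x hx y hy (by linarith)).not_ge (Nat.pairwise_one_le_dist hne)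

section Fibers

variable {ι : Type*} {c : α → ι} {C : ι → Set α} {s : Finset ι} {i : ι}

lemma preimage_sdiff_biUnion_of_mem (hC : ∀ i, C i ⊆ c ⁻¹' {i}) (hi : i ∈ s) :
    c ⁻¹' {i} \ ⋃ j ∈ s, C j = c ⁻¹' {i} \ C i := by
  ext x
  simp only [Set.mem_sdiff, mem_iUnion, exists_prop, not_exists, not_and]
  refine and_congr_right fun hx => ⟨fun h => h i hi, fun h j _ hxj => h ?_⟩
  obtain rfl : i = j := hx.symm.trans (hC j hxj)
  exact hxj

lemma preimage_sdiff_biUnion_of_notMem (hC : ∀ i, C i ⊆ c ⁻¹' {i}) (hi : i ∉ s) :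
    c ⁻¹' {i} \ ⋃ j ∈ s, C j = c ⁻¹' {i} := by
  refine sdiff_eq_left.2 (disjoint_iUnion₂_right.2 fun j hj => ?_)
  have hij : i ≠ j := (ne_of_mem_of_not_mem hj hi).symm
  exact ((disjoint_singleton.2 hij).preimage c).mono_right (hC j)

end Fibers

variable [MeasurableSpace α] {μ : Measure α}

lemma measurable_tailLabel (hK : MeasurableSet K) (ha : Measurable a) :
    Measurable (tailLabel K a) :=
  (ha.add_const 1).indicator hK.compl

lemma tendsto_mul_information_add_self :
    Tendsto (fun p => p * information p + p) (𝓝 0) (𝓝 0) := by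
  have h : Tendsto (fun p : ℝ≥0∞ => ENNReal.ofReal (Real.negMulLog p.toReal) + p) (𝓝 0)
      (𝓝 (ENNReal.ofReal (Real.negMulLog (0 : ℝ≥0∞).toReal) + 0)) :=
    (ENNReal.tendsto_ofReal ((Real.continuous_negMulLog.tendsto _).comp
      (ENNReal.tendsto_toReal ENNReal.zero_ne_top))).add tendsto_id
  simpa [ofReal_negMulLog_toReal] using h

lemma shannonEntropy_tailLabel_le [IsProbabilityMeasure μ] (hK : MeasurableSet K)
    (ha : Measurable a) :
    shannonEntropy μ (tailLabel K a)
      ≤ ∑' i, (μ (a ⁻¹' {i} \ K) * information (μ (a ⁻¹' {i} \ K)) + μ (a ⁻¹' {i} \ K)) := by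
  have hsum : μ K + ∑' i, μ (a ⁻¹' {i} \ K) = 1 := by
    have h := tsum_measure_fiber (μ := μ) (measurable_tailLabel hK ha)
    rw [tsum_eq_zero_add' ENNReal.summable] at h
    simpa only [tailLabel_preimage_zero, tailLabel_preimage_succ] using h
  have hK_info : μ K * information (μ K) ≤ ∑' i, μ (a ⁻¹' {i} \ K) := by
    refine (ENNReal.add_le_add_iff_right (measure_ne_top μ K)).1 ?_
    calc μ K * information (μ K) + μ K
      _ ≤ μ K * information 1 + 1 := mul_information_add_self_le prob_le_one 1
      _ = ∑' i, μ (a ⁻¹' {i} \ K) + μ K := by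
        rw [information_one, mul_zero, zero_add, add_comm _ (μ K), hsum]
  rw [shannonEntropy_eq_tsum, tsum_eq_zero_add' ENNReal.summable, ENNReal.tsum_add, add_comm]
  simp only [tailLabel_preimage_zero, tailLabel_preimage_succ]
  gcongr

lemma exists_isCompact_subset_mul_information_add_self_lt [TopologicalSpace α] [T2Space α]
    [OpensMeasurableSpace α] [IsFiniteMeasure μ] [μ.InnerRegularCompactLTTop] {A : Set α}
    (hA : MeasurableSet A) {ε : ℝ≥0∞} (hε : 0 < ε) :
    ∃ C ⊆ A, IsCompact C ∧ μ (A \ C) * information (μ (A \ C)) + μ (A \ C) < ε := by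
  obtain ⟨δ, hδ, hδε⟩ := ENNReal.nhds_zero_basis.eventually_iff.1
    (tendsto_mul_information_add_self.eventually_lt_const hε)
  obtain ⟨C, hCA, hC, hCδ⟩ := hA.exists_isCompact_sdiff_lt (measure_ne_top μ A) hδ.ne'
  exact ⟨C, hCA, hC, hδε hCδ⟩

lemma exists_isCompact_continuousOn_shannonEntropy_tailLabel_le [TopologicalSpace α] [T2Space α]
    [OpensMeasurableSpace α] [IsProbabilityMeasure μ] [μ.InnerRegularCompactLTTop]
    (ha : Measurable a) (hH : shannonEntropy μ a ≠ ⊤) {ε : ℝ≥0∞} (hε : ε ≠ 0) :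
    ∃ K, IsCompact K ∧ ContinuousOn a K ∧ shannonEntropy μ (tailLabel K a) ≤ ε := by
  let ψ : ℝ≥0∞ → ℝ≥0∞ := fun p => p * information p + p
  have htotal : ∑' i, ψ (μ (a ⁻¹' {i})) ≠ ⊤ := by
    rw [ENNReal.tsum_add, ← shannonEntropy_eq_tsum, tsum_measure_fiber ha]
    finiteness
  obtain ⟨s, hs⟩ : ∃ s : Finset ℕ, ∑' i : {i // i ∉ s}, ψ (μ (a ⁻¹' {i.1})) < ε / 2 :=
    ((ENNReal.tendsto_tsum_compl_atTop_zero htotal).eventually_lt_const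
      (ENNReal.half_pos hε)).exists
  obtain ⟨e, he, he_sum⟩ := ENNReal.exists_pos_sum_of_countable' (ENNReal.half_pos hε).ne' ℕ
  choose C hCa hC hCe using fun i =>
    exists_isCompact_subset_mul_information_add_self_lt (μ := μ) (ha (measurableSet_singleton i))
      (he i)
  have hK : IsCompact (⋃ i ∈ s, C i) := s.isCompact_biUnion fun i _ => hC i
  refine ⟨⋃ i ∈ s, C i, hK, ?_, ?_⟩
  · change ContinuousOn a (⋃ i ∈ (s : Set ℕ), C i)
    rw [biUnion_eq_iUnion]
    exact (locallyFinite_of_finite _).continuousOn_iUnion (fun i => (hC i).isClosed)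
      fun i => continuousOn_const.congr (hCa i)
  calc shannonEntropy μ (tailLabel (⋃ i ∈ s, C i) a)
    _ ≤ ∑' i, ψ (μ (a ⁻¹' {i} \ ⋃ j ∈ s, C j)) :=
      shannonEntropy_tailLabel_le hK.isClosed.measurableSet ha
    _ = ∑ i ∈ s, ψ (μ (a ⁻¹' {i} \ C i)) + ∑' i : {i // i ∉ s}, ψ (μ (a ⁻¹' {i.1})) := by
      rw [← ENNReal.sum_add_tsum_compl s]
      congr 1
      · exact Finset.sum_congr rfl fun i hi => by rw [preimage_sdiff_biUnion_of_mem hCa hi]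
      · exact tsum_congr fun i => by rw [preimage_sdiff_biUnion_of_notMem hCa i.2]
    _ ≤ ∑ i ∈ s, e i + ε / 2 := by
      gcongr
      exact (hCe _).le
    _ ≤ ε / 2 + ε / 2 := by
      gcongr
      exact (ENNReal.sum_le_tsum s).trans he_sum.le
    _ = ε := ENNReal.add_halves ε

end CompactApproximation

lemma ae_forall_iterate {α : Type*} [MeasurableSpace α] {ν : Measure α} {f : α → α}
    (hf : Measure.QuasiMeasurePreserving f ν ν) {p : α → Prop} (hp : ∀ᵐ x ∂ν, p x) :
    ∀ᵐ x ∂ν, ∀ k, p (f^[k] x) :=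
  ae_all_iff.2 fun k => (hf.iterate k).ae hp

section Coding

/-- The code by which the `a`-itineraries are counted: the itineraries of two coarser labellings
and the membership in `M`. -/
def coarseCode {α ι κ : Type*} (f : α → α) (b : α → ι) (t : α → κ) (M : Set α) (n : ℕ) (x : α) :
    ((Fin n → ι) × (Fin n → κ)) × Prop :=
  ((itinerary f b n x, itinerary f t n x), x ∈ M)

section Entropy

variable {α ι κ : Type*} [MeasurableSpace α] {ν : Measure α} {f : α → α} {b : α → ι} {t : α → κ}
  {M : Set α} [MeasurableSpace ι] [MeasurableSpace κ]

lemma measurable_coarseCode (hf : Measurable f) (hb : Measurable b) (ht : Measurable t)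
    (hM : MeasurableSet M) (n : ℕ) : Measurable (coarseCode f b t M n) :=
  ((measurable_itinerary hf hb n).prodMk (measurable_itinerary hf ht n)).prodMk hM.mem

lemma shannonEntropy_coarseCode_le [MeasurableSingletonClass ι] [Countable ι]
    [MeasurableSingletonClass κ] [Countable κ] [IsProbabilityMeasure ν]
    (hf : MeasurePreserving f ν ν) (hb : Measurable b) (ht : Measurable t) (hM : MeasurableSet M)
    (n : ℕ) :
    shannonEntropy ν (coarseCode f b t M n)
      ≤ shannonEntropy ν (itinerary f b n) + n * shannonEntropy ν t
        + ENNReal.ofReal (Real.log 2) := by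
  have hbn := measurable_itinerary hf.measurable hb n
  have htn := measurable_itinerary hf.measurable ht n
  have hM_entropy : shannonEntropy ν (· ∈ M) ≤ ENNReal.ofReal (Real.log 2) := by
    simpa using shannonEntropy_le_log_card (μ := ν) hM.mem
  calc shannonEntropy ν (coarseCode f b t M n)
    _ ≤ shannonEntropy ν (itinerary f b n) + shannonEntropy ν (itinerary f t n)
        + shannonEntropy ν (· ∈ M) :=
      (shannonEntropy_prodMk_le (hbn.prodMk htn) hM.mem).trans
        (add_le_add_left (shannonEntropy_prodMk_le hbn htn) _)
    _ ≤ shannonEntropy ν (itinerary f b n) + n * shannonEntropy ν t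
        + ENNReal.ofReal (Real.log 2) := by
      gcongr
      exact shannonEntropy_itinerary_le hf ht n

lemma exists_mem_of_mem_condSupport [MeasurableSingletonClass ι] [MeasurableSingletonClass κ]
    [IsFiniteMeasure ν] {Λ : Set α} (hb : Measurable b) (ht : Measurable t)
    {p : α → Prop} (hp : ∀ᵐ x ∂ν, p x) {i : ι} {j : κ} (hj : j ∈ condSupport ν b t i)
    (hi : b ⁻¹' {i} ⊆ toMeasurable ν Λ) :
    ∃ y ∈ Λ, b y = i ∧ t y = j ∧ p y := by
  have hmeas : MeasurableSet (b ⁻¹' {i} ∩ t ⁻¹' {j}) :=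
    (hb (measurableSet_singleton i)).inter (ht (measurableSet_singleton j))
  have hΛ : ν (Λ ∩ (b ⁻¹' {i} ∩ t ⁻¹' {j})) ≠ 0 := by
    rwa [← Measure.measure_toMeasurable_inter hmeas (measure_ne_top ν Λ),
      inter_eq_self_of_subset_right (inter_subset_left.trans hi)]
  obtain ⟨y, ⟨hyΛ, hyi, hyj⟩, hy⟩ := ((frequently_ae_mem_iff.2 hΛ).and_eventually hp).exists
  exact ⟨y, hyΛ, hyi, hyj, hy⟩

end Entropy

section Tail

variable {α ι : Type*} [MeasurableSpace α] {ν : Measure α} {f : α → α} {b : α → ι} {a : α → ℕ}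
  {K M : Set α} {s : Finset ℕ} {n : ℕ}

lemma condSupport_coarseCode_tailLabel_subset (hs : MapsTo a K s)
    (i : ((Fin n → ι) × (Fin n → ℕ)) × Prop) :
    condSupport ν (coarseCode f b (tailLabel K a) M n) (itinerary f a n) i
      ⊆ Fintype.piFinset fun k => insert (i.1.2 k - 1) s := by
  intro j hj
  obtain ⟨x, rfl, rfl⟩ := nonempty_of_measure_ne_zero hj
  refine Finset.mem_coe.2 (Fintype.mem_piFinset.2 fun k => Finset.mem_insert.2 ?_)
  by_cases hx : f^[k] x ∈ K
  · exact .inr (hs hx)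
  · exact .inl (by simp [coarseCode, itinerary, tailLabel_of_notMem hx])

lemma finite_condSupport_coarseCode_tailLabel (hs : MapsTo a K s)
    (i : ((Fin n → ι) × (Fin n → ℕ)) × Prop) :
    (condSupport ν (coarseCode f b (tailLabel K a) M n) (itinerary f a n) i).Finite :=
  (Finset.finite_toSet _).subset (condSupport_coarseCode_tailLabel_subset hs i)

lemma ncard_condSupport_coarseCode_tailLabel_le (hs : MapsTo a K s)
    (i : ((Fin n → ι) × (Fin n → ℕ)) × Prop) :
    (condSupport ν (coarseCode f b (tailLabel K a) M n) (itinerary f a n) i).ncard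
      ≤ (s.card + 1) ^ n := by
  calc (condSupport ν (coarseCode f b (tailLabel K a) M n) (itinerary f a n) i).ncard
    _ ≤ (Fintype.piFinset fun k => insert (i.1.2 k - 1) s).card := by
      rw [← ncard_coe_finset]
      exact ncard_le_ncard (condSupport_coarseCode_tailLabel_subset hs i)
    _ ≤ ∏ _ : Fin n, (s.card + 1) := by
      rw [Fintype.card_piFinset]
      exact Finset.prod_le_prod' fun k _ => Finset.card_insert_le _ _
    _ = (s.card + 1) ^ n := by simp

end Tail

variable {E : Type*} [MetricSpace E] [CompactSpace E] [MeasurableSpace E] {ν : Measure E}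
  [IsProbabilityMeasure ν] {f : E → E} {a b : E → ℕ} {P : ℕ → Set E} {η : E → ℝ} {Ω K : Set E}
  {s : Finset ℕ} {γ : ℝ}

lemma ae_ncard_condSupport_coarseCode_le_sepCount
    (hf : MeasurePreserving f ν ν) (hΩ : ∀ᵐ x ∂ν, x ∈ Ω) (ha : Measurable a) (hb : Measurable b)
    (hbP : ∀ᵐ x ∂ν, x ∈ P (b x)) (hPη : ∀ i, ∀ x ∈ P i, ∀ y ∈ P i, dist x y ≤ η x)
    (hK : MeasurableSet K) (hs : MapsTo a K s) (hγ : 0 < γ)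
    (hsep : ∀ x ∈ K, ∀ y ∈ K, a x ≠ a y → γ < dist x y) (Λ : Set E) (n : ℕ) :
    ∀ᵐ x ∂ν, x ∈ toMeasurable ν Λ →
      (condSupport ν (coarseCode f b (tailLabel K a) (toMeasurable ν Λ) n) (itinerary f a n)
        (coarseCode f b (tailLabel K a) (toMeasurable ν Λ) n x)).ncard
        ≤ sepCount f Ω η n γ Λ x := by
  set Z := coarseCode f b (tailLabel K a) (toMeasurable ν Λ) n
  have hZ : Measurable Z := measurable_coarseCode hf.measurable hb (measurable_tailLabel hK ha)
    (measurableSet_toMeasurable ν Λ) n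
  have horbit := ae_forall_iterate hf.quasiMeasurePreserving hbP
  filter_upwards [horbit] with x hxP hxΛ
  have hZx : Z ⁻¹' {Z x} ⊆ toMeasurable ν Λ := fun y hy => (congrArg Prod.snd hy).mpr hxΛ
  have representative (j) (hj : j ∈ condSupport ν Z (itinerary f a n) (Z x)) :=
    exists_mem_of_mem_condSupport hZ (measurable_itinerary hf.measurable ha n)
      (hΩ.and horbit) hj hZx
  -- The code of `x` pins each representative to the dynamical ball of `x`, and two of them are
  -- separated at a time when their labels differ, both being in `K` then.
  have : Nonempty E := ⟨x⟩
  choose! Y hYΛ hYZ hYa hYΩ hYP using representative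
  refine ncard_le_sepCount (finite_condSupport_coarseCode_tailLabel hs _) hγ (Y := Y)
    (fun j hj => ⟨⟨hYΩ j hj, fun i hi => ?_⟩, hYΛ j hj⟩) fun j hj l hl hjl => ?_
  · have hb_eq : b (f^[i] (Y j)) = b (f^[i] x) :=
      itinerary_eq_iff.1 (congrArg (·.1.1) (hYZ j hj)) i hi
    exact hPη _ _ (hxP i) _ (hb_eq ▸ hYP j hj i)
  · rw [← hYa j hj, ← hYa l hl, Ne, itinerary_eq_iff] at hjl
    push Not at hjl
    obtain ⟨i, hi, hne⟩ := hjl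
    have tail_eq : tailLabel K a (f^[i] (Y j)) = tailLabel K a (f^[i] (Y l)) :=
      itinerary_eq_iff.1 (congrArg (·.1.2) ((hYZ j hj).trans (hYZ l hl).symm)) i hi
    obtain ⟨hjK, hlK⟩ := mem_of_tailLabel_eq tail_eq hne
    exact ⟨i, hi, hsep _ hjK _ hlK hne⟩

lemma shannonEntropy_itinerary_le_add_lintegral_sepCount
    (hf : MeasurePreserving f ν ν) (hΩ : ∀ᵐ x ∂ν, x ∈ Ω) (ha : Measurable a) (hb : Measurable b)
    (hbP : ∀ᵐ x ∂ν, x ∈ P (b x)) (hPη : ∀ i, ∀ x ∈ P i, ∀ y ∈ P i, dist x y ≤ η x)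
    (hK : MeasurableSet K) (hs : MapsTo a K s) (hγ : 0 < γ)
    (hsep : ∀ x ∈ K, ∀ y ∈ K, a x ≠ a y → γ < dist x y) (Λ : Set E) (n : ℕ) :
    shannonEntropy ν (itinerary f a n)
      ≤ shannonEntropy ν (itinerary f b n) + n * shannonEntropy ν (tailLabel K a)
        + ENNReal.ofReal (Real.log 2)
        + (∫⁻ x in Λ, ENNReal.ofReal (Real.log (sepCount f Ω η n γ Λ x)) ∂ν
          + n * ENNReal.ofReal (Real.log (s.card + 1)) * ν (toMeasurable ν Λ)ᶜ) := by
  set M := toMeasurable ν Λ with hM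
  set Z := coarseCode f b (tailLabel K a) M n
  set J := condSupport ν Z (itinerary f a n)
  have hM_meas : MeasurableSet M := measurableSet_toMeasurable ν Λ
  have ht := measurable_tailLabel hK ha
  have hZ : Measurable Z := measurable_coarseCode hf.measurable hb ht hM_meas n
  have han := measurable_itinerary hf.measurable ha n
  have inside : ∫⁻ x in M, ENNReal.ofReal (Real.log (J (Z x)).ncard) ∂ν
      ≤ ∫⁻ x in Λ, ENNReal.ofReal (Real.log (sepCount f Ω η n γ Λ x)) ∂ν := by
    rw [hM, ← Measure.restrict_toMeasurable (measure_ne_top ν Λ)]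
    refine lintegral_mono_ae ((ae_restrict_iff' hM_meas).2 ?_)
    filter_upwards [ae_ncard_condSupport_coarseCode_le_sepCount hf hΩ ha hb hbP hPη hK hs hγ hsep
      Λ n] with x hx hxM using ofReal_log_natCast_mono (hx hxM)
  have outside : ∫⁻ x in Mᶜ, ENNReal.ofReal (Real.log (J (Z x)).ncard) ∂ν
      ≤ n * ENNReal.ofReal (Real.log (s.card + 1)) * ν Mᶜ := by
    rw [← setLIntegral_const]
    refine lintegral_mono fun x => ?_
    calc ENNReal.ofReal (Real.log (J (Z x)).ncard)
      _ ≤ ENNReal.ofReal (Real.log ((s.card + 1) ^ n : ℕ)) :=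
        ofReal_log_natCast_mono (ncard_condSupport_coarseCode_tailLabel_le hs _)
      _ = n * ENNReal.ofReal (Real.log (s.card + 1)) := by
        push_cast
        rw [Real.log_pow, ENNReal.ofReal_mul n.cast_nonneg, ENNReal.ofReal_natCast]
  calc shannonEntropy ν (itinerary f a n)
    _ ≤ shannonEntropy ν (fun x => (Z x, itinerary f a n x)) :=
      shannonEntropy_comp_le (hZ.prodMk han) Prod.snd
    _ ≤ shannonEntropy ν Z + ∫⁻ x, ENNReal.ofReal (Real.log (J (Z x)).ncard) ∂ν :=
      shannonEntropy_prodMk_le_add_lintegral_log_ncard hZ han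
        (finite_condSupport_coarseCode_tailLabel hs)
    _ ≤ _ := by
      rw [← lintegral_add_compl _ hM_meas]
      exact add_le_add (shannonEntropy_coarseCode_le hf hb ht hM_meas n)
        (add_le_add inside outside)

end Coding

section LocalEntropy

variable {α : Type*} [MeasurableSpace α] {ν : Measure α}

lemma exists_mul_measure_compl_toMeasurable_le [IsProbabilityMeasure ν] {c : ℝ≥0∞} (hc : c ≠ ⊤)
    {δ : ℝ≥0∞} (hδ : δ ≠ 0) :
    ∃ σ ∈ Ioo (0 : ℝ) 1, ∀ Λ, ENNReal.ofReal σ ≤ ν Λ → c * ν (toMeasurable ν Λ)ᶜ ≤ δ := by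
  have tendsto_zero : Tendsto (fun σ : ℝ => c * ENNReal.ofReal (1 - σ)) (𝓝[<] 1) (𝓝 0) := by
    have h : Tendsto (fun σ : ℝ => c * ENNReal.ofReal (1 - σ)) (𝓝 1)
        (𝓝 (c * ENNReal.ofReal (1 - 1))) :=
      ENNReal.Tendsto.const_mul
        (ENNReal.tendsto_ofReal (tendsto_const_nhds.sub tendsto_id)) (.inr hc)
    rw [sub_self, ENNReal.ofReal_zero, mul_zero] at h
    exact h.mono_left nhdsWithin_le_nhds
  obtain ⟨σ, hσδ, hσ⟩ := ((tendsto_zero.eventually_lt_const (pos_iff_ne_zero.2 hδ)).and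
    (Ioo_mem_nhdsLT zero_lt_one)).exists
  refine ⟨σ, hσ, fun Λ hΛ => le_trans ?_ hσδ.le⟩
  gcongr
  rw [prob_compl_eq_one_sub (measurableSet_toMeasurable ν Λ), measure_toMeasurable,
    ENNReal.ofReal_sub _ hσ.1.le, ENNReal.ofReal_one]
  gcongr

lemma exists_eventually_lintegral_sepCount_div_lt [MetricSpace α] {f : α → α} {Ω : Set α}
    {η : α → ℝ} {c : ℝ≥0∞} (hc : locEntropy f Ω η ν < c) {σ : ℝ} (hσ : σ ∈ Ioo (0 : ℝ) 1) :
    ∃ Λ, ENNReal.ofReal σ ≤ ν Λ ∧ ∀ γ > 0, ∀ᶠ n : ℕ in atTop,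
      (∫⁻ x in Λ, ENNReal.ofReal (Real.log (sepCount f Ω η n γ Λ x)) ∂ν) / n < c := by
  obtain ⟨Λ, hΛ⟩ := iInf_lt_iff.1 ((le_iSup _ (⟨σ, hσ⟩ : Ioo (0 : ℝ) 1)).trans_lt hc)
  exact ⟨Λ, Λ.2, fun γ hγ =>
    eventually_lt_of_limsup_lt ((le_iSup _ (⟨γ, hγ⟩ : Ioi (0 : ℝ))).trans_lt hΛ)⟩

end LocalEntropy

section Main

variable {f : X → X} {ν : Measure X} [IsProbabilityMeasure ν] {Ω : Set X} {η : X → ℝ}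
  {P : ℕ → Set X} {a b : X → ℕ}

lemma exists_forall_shannonEntropy_itinerary_le (hf : MeasurePreserving f ν ν)
    (hΩ : ∀ᵐ x ∂ν, x ∈ Ω) (ha : Measurable a) (haH : shannonEntropy ν a ≠ ⊤) (hb : Measurable b)
    (hbP : ∀ᵐ x ∂ν, x ∈ P (b x)) (hPη : ∀ i, ∀ x ∈ P i, ∀ y ∈ P i, dist x y ≤ η x)
    {δ : ℝ≥0∞} (hδ : δ ≠ 0) :
    ∃ σ ∈ Ioo (0 : ℝ) 1, ∃ γ > 0, ∀ Λ, ENNReal.ofReal σ ≤ ν Λ → ∀ n : ℕ,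
      shannonEntropy ν (itinerary f a n)
        ≤ shannonEntropy ν (itinerary f b n) + n * δ + ENNReal.ofReal (Real.log 2)
          + (∫⁻ x in Λ, ENNReal.ofReal (Real.log (sepCount f Ω η n γ Λ x)) ∂ν + n * δ) := by
  obtain ⟨K, hK, haK, hKδ⟩ := exists_isCompact_continuousOn_shannonEntropy_tailLabel_le ha haH hδ
  obtain ⟨γ, hγ, hsep⟩ := exists_pos_forall_lt_dist hK haK
  obtain ⟨s, hs⟩ := (hK.image_of_continuousOn haK).finite_of_discrete.exists_finset_coe
  have hsK : MapsTo a K s := mapsTo_iff_image_subset.2 hs.ge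
  -- The rate `log (#s + 1)` outside `Λ` is fixed before `σ`, which can absorb it.
  obtain ⟨σ, hσ, hσδ⟩ := exists_mul_measure_compl_toMeasurable_le (ν := ν)
    (c := ENNReal.ofReal (Real.log (s.card + 1))) ENNReal.ofReal_ne_top hδ
  refine ⟨σ, hσ, γ, hγ, fun Λ hΛ n => ?_⟩
  refine (shannonEntropy_itinerary_le_add_lintegral_sepCount hf hΩ ha hb hbP hPη
    hK.isClosed.measurableSet hsK hγ hsep Λ n).trans ?_
  rw [mul_assoc]
  gcongr
  exact hσδ Λ hΛ

lemma dynEntropy_le_dynEntropy_add_locEntropy (hf : MeasurePreserving f ν ν)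
    (hΩ : ∀ᵐ x ∂ν, x ∈ Ω) {Q : ℕ → Set X} (ha : Measurable a) (haQ : ∀ i, Q i =ᵐ[ν] a ⁻¹' {i})
    (hQ : partEntropy ν Q ≠ ⊤) (hb : Measurable b) (hbP : ∀ i, P i =ᵐ[ν] b ⁻¹' {i})
    (hPη : ∀ i, ∀ x ∈ P i, ∀ y ∈ P i, dist x y ≤ η x) :
    dynEntropy f ν Q ≤ dynEntropy f ν P + locEntropy f Ω η ν := by
  have haH : shannonEntropy ν a ≠ ⊤ := by rwa [← partEntropy_eq_shannonEntropy haQ]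
  have hbP' : ∀ᵐ x ∂ν, x ∈ P (b x) := by
    filter_upwards [ae_all_iff.2 fun i => eventuallyEq_set.1 (hbP i)] with x hx
      using (hx (b x)).2 rfl
  refine ENNReal.le_of_forall_pos_le_add fun ε hε hfin => ?_
  obtain ⟨hP, hloc⟩ := ENNReal.add_lt_top.1 hfin
  obtain ⟨δ, hδ, rfl⟩ : ∃ δ : ℝ≥0, 0 < δ ∧ 5 * δ = ε := ⟨ε / 5, by positivity, by field_simp⟩
  have hδ' : (δ : ℝ≥0∞) ≠ 0 := by exact_mod_cast hδ.ne'
  obtain ⟨σ, hσ, γ, hγ, hbound⟩ :=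
    exists_forall_shannonEntropy_itinerary_le hf hΩ ha haH hb hbP' hPη hδ'
  obtain ⟨Λ, hΛ, hΛloc⟩ := exists_eventually_lintegral_sepCount_div_lt
    (ENNReal.lt_add_right hloc.ne hδ') hσ
  have hlog : ∀ᶠ n : ℕ in atTop, ENNReal.ofReal (Real.log 2) / n < δ := by
    refine Tendsto.eventually_lt_const (pos_iff_ne_zero.2 hδ') ?_
    simpa using ENNReal.Tendsto.const_div ENNReal.tendsto_nat_nhds_top
      (.inr (ENNReal.ofReal_ne_top (r := Real.log 2)))
  obtain ⟨n, hn_P, ⟨hn_loc, hn_log⟩, hn⟩ :=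
    ((frequently_itinerary_div_lt hf hb hbP (ENNReal.lt_add_right hP.ne hδ')).and_eventually
      (((hΛloc γ hγ).and hlog).and (eventually_ne_atTop 0))).exists
  have hn_mul : (n * δ / n : ℝ≥0∞) = δ := by
    rw [mul_comm, ENNReal.mul_div_cancel_right (by exact_mod_cast hn) (by finiteness)]
  calc dynEntropy f ν Q
    _ ≤ shannonEntropy ν (itinerary f a n) / n := dynEntropy_le_itinerary_div hf haQ hn
    _ ≤ shannonEntropy ν (itinerary f b n) / n + δ + ENNReal.ofReal (Real.log 2) / n
        + ((∫⁻ x in Λ, ENNReal.ofReal (Real.log (sepCount f Ω η n γ Λ x)) ∂ν) / n + δ) := by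
      refine (ENNReal.div_le_div_right (hbound Λ hΛ n) _).trans_eq ?_
      simp only [ENNReal.add_div, hn_mul]
    _ ≤ dynEntropy f ν P + δ + δ + δ + (locEntropy f Ω η ν + δ + δ) := by gcongr
    _ = dynEntropy f ν P + locEntropy f Ω η ν + (5 * δ : ℝ≥0) := by
      push_cast
      ring

theorem entropy_le_partition_entropy_add_local_entropy_general {S : Set X}
    (hf : MeasurePreserving f ν ν) (hΩ : ∀ᵐ x ∂ν, x ∈ Ω) (hS : ∀ᵐ x ∂ν, x ∈ S)
    (hP : IsCountablePartition S P) (hPη : ∀ i, ∀ x ∈ P i, ∀ y ∈ P i, dist x y ≤ η x) :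
    metricEntropy f Ω ν ≤ dynEntropy f ν P + locEntropy f Ω η ν := by
  obtain ⟨b, hb, hbP⟩ := exists_measurable_label hP hS
  refine iSup_le fun ⟨Q, hQ, hQ_fin⟩ => ?_
  obtain ⟨a, ha, haQ⟩ := exists_measurable_label hQ hΩ
  exact dynEntropy_le_dynEntropy_add_locEntropy hf hΩ ha haQ hQ_fin.ne hb hbP hPη

end Main

section Mane

variable {α : Type*} [MeasurableSpace α] {f : α → α} {I : Set α} {ν : Measure α}

lemma MemM.measurePreserving (hν : MemM f I ν) (hf : Measurable f) : MeasurePreserving f ν ν :=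
  ⟨hf, hν.2.2⟩

lemma MemM.ae_mem_dynOmega (hν : MemM f I ν) (hf : Measurable f) : ∀ᵐ x ∂ν, x ∈ dynOmega f I :=
  ae_forall_iterate (hν.measurePreserving hf).quasiMeasurePreserving
    (measure_eq_zero_iff_ae_notMem.1 hν.2.1)

lemma measurableSet_dynOmega (hf : Measurable f) (hI : MeasurableSet I) :
    MeasurableSet (dynOmega f I) :=
  measurableSet_setOfPred.2 (.forall fun n => (hf.iterate n hI).mem.not)

lemma IsCountablePartition.inter {S A : Set α} {P : ℕ → Set α} (hP : IsCountablePartition S P)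
    (hA : MeasurableSet A) : IsCountablePartition (S ∩ A) fun i => P i ∩ A :=
  ⟨fun i => (hP.1 i).inter hA,
    fun _ _ hij => (hP.2.1 hij).mono inter_subset_left inter_subset_left,
    by rw [← iUnion_inter, hP.2.2]⟩

lemma IsManePartition.dist_le [MetricSpace α] [BoundedSpace α] {k : ℕ} {η : α → ℝ}
    {P : ℕ → Set α} (hP : IsManePartition k η P) {i : ℕ} {x y : α} (hx : x ∈ P i) (hy : y ∈ P i) :
    dist x y ≤ η x := by
  obtain ⟨n, hPV, hdiam⟩ := hP.2.1 i ⟨x, hx⟩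
  calc dist x y
    _ ≤ Metric.diam (P i) := dist_le_diam_of_mem (Bornology.IsBounded.all _) hx hy
    _ ≤ Real.exp (-(n + 1 : ℝ)) := hdiam.le
    _ ≤ η x := (hPV hx).1.le

end Mane

/-- **Theorem (local entropy ŕ la Newhouse).** For every `ν ∈ 𝓜` with `∫ log η dν > -∞`
(encoded as integrability of `log ∘ η` together with `ν{η = 0} = 0`), one has
`h_ν(f) ≤ h_ν(f, 𝒫) + h_{ν,η,loc}(f)`, where `𝒫` is the Mané partition associated to `η`,
restricted to `Ω`. -/
theorem entropy_le_partition_entropy_add_local_entropy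
    (k : ℕ) (f : X → X) (I : Set X) (hI : IsClosed I)
    (hf : Measurable f) (hfc : ContinuousOn f Iᶜ)
    (η : X → ℝ) (hηc : Continuous η) (hη01 : ∀ x, η x ∈ Icc (0 : ℝ) 1)
    (hηI : ∀ x ∈ I, η x = 0)
    (P : ℕ → Set X) (hP : IsManePartition k η P)
    (ν : Measure X) (hν : MemM f I ν)
    (hint : Integrable (fun x => Real.log (η x)) ν)
    (hzero : ν {x | η x = 0} = 0) :
    metricEntropy f (dynOmega f I) ν
      ≤ dynEntropy f ν (fun i => P i ∩ dynOmega f I)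
        + locEntropy f (dynOmega f I) η ν := by
  have : IsProbabilityMeasure ν := hν.1
  have hΩ : ∀ᵐ x ∂ν, x ∈ dynOmega f I := hν.ae_mem_dynOmega hf
  have hη : ∀ᵐ x ∂ν, η x ≠ 0 := measure_eq_zero_iff_ae_notMem.1 hzero
  exact entropy_le_partition_entropy_add_local_entropy_general (hν.measurePreserving hf) hΩ
    (hη.and hΩ) (hP.1.inter (measurableSet_dynOmega hf hI.measurableSet))
    fun _ _ hx _ hy => hP.dist_le hx.1 hy.1
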